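/- The twin policy of every weak unichain policy for 𝔅_n is a weak unichain policy for 𝔇_n. Moreover, let π_* denote the policy for 𝔅_n in which stay(n) and travel(1) are active, enter(i) is active for all i ∈ {1,…,n}, and leave(j) is active for all j ∈ {1,…,n−1}; then the twin policy of π_* is optimal for 𝔇_n: for every weak unichain policy π̃ for 𝔇_n and every vertex v of 𝔇_n, the value of v under the twin policy of π_* is at least Val_{π̃}(v). -/

import Mathlib

/-! ## The Markov decision process `𝔅_n` -/

/-- Vertices of the MDP `𝔅_n`: a transportation vertex `t`, a sink `s`, a dummy vertex `d`,
and vertices `a i`, `b i` for `i ∈ {1,…,n}`. -/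
inductive BV : Type where
  | t : BV
  | s : BV
  | d : BV
  | a : ℕ → BV
  | b : ℕ → BV
deriving DecidableEq

/-- The vertex `a i` for `i ∈ {1,…,n+1}`, with the convention `a (n+1) = s`. -/
def aN (n i : ℕ) : BV := if i = n + 1 then BV.s else BV.a i

/-- The vertex `b i` for `i ∈ {1,…,n+1}`, with the convention `b (n+1) = d`. -/
def bN (n i : ℕ) : BV := if i = n + 1 then BV.d else BV.b i

/-- The vertex set of `𝔅_n`. -/
def IsBVertex (n : ℕ) : BV → Prop
  | BV.t => True
  | BV.s => True
  | BV.d => True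
  | BV.a i => 1 ≤ i ∧ i ≤ n
  | BV.b i => 1 ≤ i ∧ i ≤ n

/-- The edge relation of `𝔅_n`: travel, enter, skip, board, stay, leave edges,
the edge `(d,s)` and the self-loop `(s,s)`. -/
def BEdge (n : ℕ) (u v : BV) : Prop :=
  (∃ i, 1 ≤ i ∧ i ≤ n ∧ u = BV.t ∧ v = BV.a i) ∨
  (∃ i, 1 ≤ i ∧ i ≤ n ∧ u = BV.a i ∧ v = BV.b i) ∨
  (∃ i, 1 ≤ i ∧ i ≤ n ∧ u = BV.a i ∧ v = aN n (i + 1)) ∨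
  (∃ i, 1 ≤ i ∧ i ≤ n ∧ u = BV.a i ∧ v = BV.t) ∨
  (∃ i, 1 ≤ i ∧ i ≤ n ∧ u = BV.b i ∧ v = bN n (i + 1)) ∨
  (∃ i, 1 ≤ i ∧ i ≤ n ∧ u = BV.b i ∧ v = aN n (i + 1)) ∨
  (u = BV.d ∧ v = BV.s) ∨ (u = BV.s ∧ v = BV.s)

/-- The reward function of `𝔅_n`: `r(enter i) = 2^i`, `r(stay i) = 3/4`,
`r(board i) = -2^i + 5/4`, and reward `0` on all other edges. -/
def rB (n : ℕ) (u v : BV) : ℚ :=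
  match u, v with
  | BV.a i, BV.b j => if i = j then 2 ^ i else 0
  | BV.a i, BV.t => -(2 ^ i) + 5 / 4
  | BV.b i, BV.b j => if j = i + 1 then 3 / 4 else 0
  | BV.b i, BV.d => if i = n then 3 / 4 else 0
  | _, _ => 0

/-- A policy for `𝔅_n` chooses an outgoing edge at every vertex. -/
def IsBPolicy (n : ℕ) (π : BV → BV) : Prop := ∀ u, IsBVertex n u → BEdge n u (π u)

/-- A policy is weak unichain if it reaches the sink `s` from every vertex. -/
def BWeakUnichain (n : ℕ) (π : BV → BV) : Prop :=
  ∀ u, IsBVertex n u → ∃ k, π^[k] u = BV.s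

open Classical in
/-- The value of a vertex `v` w.r.t. a (weak unichain) policy `π`:
the sum of the rewards along the path that `π` takes from `v` to the sink `s`. -/
noncomputable def BVal (n : ℕ) (π : BV → BV) (v : BV) : ℚ :=
  if h : ∃ k, π^[k] v = BV.s then
    ∑ i ∈ Finset.range (Nat.find h), rB n (π^[i] v) (π^[i + 1] v)
  else 0

/-- The reduced costs of the edge `(u,v)` w.r.t. the policy `π`. -/
noncomputable def zB (n : ℕ) (π : BV → BV) (u v : BV) : ℚ :=
  rB n u v + BVal n π v - BVal n π u

/-- The edge `(u,v)` is an improving switch for `π` if its reduced costs are positive. -/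
def BImproving (n : ℕ) (π : BV → BV) (u v : BV) : Prop :=
  BEdge n u v ∧ 0 < zB n π u v

/-- The Bland numbering `𝒩_{𝔅_n}` of the edges of `𝔅_n`. -/
def NB (n : ℕ) (u v : BV) : ℕ :=
  match u, v with
  | BV.t, BV.a i => i
  | BV.a i, BV.b _ => n + 1 + 5 * (i - 1)
  | BV.a i, BV.a _ => n + 2 + 5 * (i - 1)
  | BV.a i, BV.s => n + 2 + 5 * (i - 1)
  | BV.a i, BV.t => n + 3 + 5 * (i - 1)
  | BV.b i, BV.b _ => n + 4 + 5 * (i - 1)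
  | BV.b i, BV.d => n + 4 + 5 * (i - 1)
  | BV.b i, BV.a _ => n + 5 + 5 * (i - 1)
  | BV.b i, BV.s => n + 5 + 5 * (i - 1)
  | BV.d, BV.s => 6 * n + 1
  | BV.s, BV.s => 6 * n + 2
  | _, _ => 0

/-- One step of Bland's policy iteration with edge numbering `N`:
apply the improving switch with the smallest number. -/
def IsBlandStep (n : ℕ) (N : BV → BV → ℕ) (π π' : BV → BV) : Prop :=
  ∃ u v, BImproving n π u v ∧ (∀ u' v', BImproving n π u' v' → N u v ≤ N u' v') ∧
    π' = Function.update π u v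

/-- `BlandReaches n N π ψ` says that Bland's policy iteration started at `π` visits `ψ`. -/
def BlandReaches (n : ℕ) (N : BV → BV → ℕ) : (BV → BV) → (BV → BV) → Prop :=
  Relation.ReflTransGen (IsBlandStep n N)

/-- The canonical policy `π_0` for `0`: `travel 1`, `skip i` and `leave i` are active. -/
def pi0 (n : ℕ) : BV → BV := fun u =>
  match u with
  | BV.t => BV.a 1
  | BV.a i => aN n (i + 1)
  | BV.b i => aN n (i + 1)
  | BV.d => BV.s
  | BV.s => BV.s

/-- The optimal policy `π_*`: `travel 1`, `enter i` for all `i`, `leave j` for `j < n`,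
and `stay n` are active. -/
def piStar (n : ℕ) : BV → BV := fun u =>
  match u with
  | BV.t => BV.a 1
  | BV.a i => BV.b i
  | BV.b i => if i = n then BV.d else BV.a (i + 1)
  | BV.d => BV.s
  | BV.s => BV.s

/-! ## Bits and canonical policies -/

/-- The least significant set bit `ℓ_1(x)` (1-based). -/
noncomputable def lsb (x : ℕ) : ℕ := sInf {i | 1 ≤ i ∧ Nat.testBit x (i - 1)}

/-- The most significant set bit `m(x)` (1-based). -/
noncomputable def msb1 (x : ℕ) : ℕ := sSup {i | 1 ≤ i ∧ Nat.testBit x (i - 1)}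

/-- The least unset bit `ℓ_0(x)` (1-based). -/
noncomputable def lzero (x : ℕ) : ℕ := sInf {i | 1 ≤ i ∧ ¬ Nat.testBit x (i - 1)}

/-- `L_i(x) = max { j ≤ i-2 | x_j = 1 or j = 1 }` (1-based bits). -/
noncomputable def Lfun (i x : ℕ) : ℕ :=
  sSup {j | 1 ≤ j ∧ j ≤ i - 2 ∧ (Nat.testBit x (j - 1) ∨ j = 1)}

/-- `IsCanonical n x π` says that `π` is the canonical policy `π_x` for `x`. -/
noncomputable def IsCanonical (n x : ℕ) (π : BV → BV) : Prop :=
  IsBPolicy n π ∧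
  if x = 0 then
    π BV.t = BV.a 1 ∧
      ∀ i, 1 ≤ i → i ≤ n → π (BV.a i) = aN n (i + 1) ∧ π (BV.b i) = aN n (i + 1)
  else
    π BV.t = BV.a (lsb x) ∧
    π (BV.b (msb1 x)) = aN n (msb1 x + 1) ∧
    (∀ i, msb1 x < i → i ≤ n → π (BV.a i) = aN n (i + 1) ∧ π (BV.b i) = aN n (i + 1)) ∧
    ∀ i, 1 ≤ i → i ≤ n → Nat.testBit x (i - 1) →
      π (BV.a i) = BV.b i ∧
      (i = 2 → π (BV.b 1) = BV.a 2 ∧ (¬ Nat.testBit x 0 → π (BV.a 1) = BV.a 2)) ∧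
      (3 ≤ i → Nat.testBit x (i - 2) → π (BV.b (i - 1)) = BV.a i) ∧
      (3 ≤ i → ¬ Nat.testBit x (i - 2) →
        π (BV.b (i - 1)) = BV.b i ∧ π (BV.a (i - 1)) = BV.a i ∧
        π (BV.b (i - 2)) = BV.a (i - 1) ∧
        (Lfun i x < i - 2 →
          ∀ j, Lfun i x + 1 ≤ j → j ≤ i - 2 →
            π (BV.a j) = BV.t ∧ π (BV.b (j - 1)) = BV.b j) ∧
        (Lfun i x = 1 → ¬ Nat.testBit x 0 → π (BV.a 1) = BV.t))

/-- Activating a list of edges in a policy, from left to right. -/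
def activateList (π : BV → BV) (L : List (BV × BV)) : BV → BV :=
  L.foldl (fun σ e => Function.update σ e.1 e.2) π

/-- The canonical phases w.r.t. an odd number `x` (with `ℓ := ℓ_0(x)`), as a list of edges
to be activated in order. -/
noncomputable def phaseList (n x : ℕ) : List (BV × BV) :=
  let ℓ := lzero x
  (if Nat.testBit x ℓ then [(BV.b ℓ, aN n (ℓ + 1))] else []) ++
  (if Nat.testBit x ℓ ∨ msb1 x < ℓ then [(BV.b (ℓ - 1), BV.b ℓ)] else []) ++
  [(BV.a ℓ, BV.b ℓ), (BV.t, BV.a ℓ)] ++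
  ((List.range (ℓ - 2)).map fun j => (BV.a (j + 1), BV.t)) ++
  [(BV.a (ℓ - 1), BV.a ℓ)] ++
  (((List.range (ℓ - 3)).reverse).map fun j => (BV.b (j + 1), BV.b (j + 2))) ++
  (if ℓ = 2 then [(BV.b 1, BV.a 2)] else [])

/-! ## The Markov decision process `𝔇_n` -/

/-- Vertices of `𝔇_n`: the original vertices (`base`), and for every edge `(v,w)` of `𝔅_n`
other than the self-loop, the gadget vertices `x v w`, `y v w`, `z v w`. -/
inductive DV : Type where
  | base : BV → DV
  | x : BV → BV → DV
  | y : BV → BV → DV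
  | z : BV → BV → DV
deriving DecidableEq

/-- The edges of `𝔅_n` that get replaced by gadgets (all edges except the self-loop `(s,s)`). -/
def DEdgePair (n : ℕ) (v w : BV) : Prop := BEdge n v w ∧ v ≠ BV.s

/-- The vertex set of `𝔇_n`. -/
def IsDVertex (n : ℕ) : DV → Prop
  | DV.base v => IsBVertex n v
  | DV.x v w => DEdgePair n v w
  | DV.y v w => DEdgePair n v w
  | DV.z v w => DEdgePair n v w

/-- The agent vertices of `𝔇_n` (all vertices except the randomization vertices `y v w`). -/
def IsDAgent (n : ℕ) : DV → Prop
  | DV.base v => IsBVertex n v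
  | DV.x v w => DEdgePair n v w
  | DV.y _ _ => False
  | DV.z v w => DEdgePair n v w

/-- The agent edges of `𝔇_n`. -/
def DEdge (n : ℕ) (u u' : DV) : Prop :=
  (∃ v w, DEdgePair n v w ∧
    ((u = DV.base v ∧ u' = DV.x v w) ∨ (u = DV.x v w ∧ u' = DV.base v) ∨
     (u = DV.x v w ∧ u' = DV.y v w) ∨ (u = DV.z v w ∧ u' = DV.base w))) ∨
  (u = DV.base BV.s ∧ u' = DV.base BV.s)

/-- The reward function of `𝔇_n`: the edge `(z v w, w)` carries the reward of the original
edge `(v,w)`; all other agent edges have reward `0`. -/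
def rD (n : ℕ) (u u' : DV) : ℚ :=
  match u, u' with
  | DV.z v w, DV.base w' => if w' = w then rB n v w else 0
  | _, _ => 0

/-- A policy for `𝔇_n` chooses an outgoing agent edge at every agent vertex. -/
def IsDPolicy (n : ℕ) (π : DV → DV) : Prop := ∀ u, IsDAgent n u → DEdge n u (π u)

/-- `IsDVal n p π V` says that `V` satisfies the Bellman equations characterizing the value
function of the policy `π` for `𝔇_n` with probabilities `p`, with `V s = 0`. -/
def IsDVal (n : ℕ) (p : BV → ℚ) (π : DV → DV) (V : DV → ℚ) : Prop :=
  V (DV.base BV.s) = 0 ∧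
  (∀ u, IsDAgent n u → V u = rD n u (π u) + V (π u)) ∧
  (∀ v w, DEdgePair n v w →
    V (DV.y v w) = p v * V (DV.z v w) + (1 - p v) * V (DV.base v))

open Classical in
/-- The value function of a (weak unichain) policy `π` for `𝔇_n`: the unique solution of the
Bellman equations (normalized to `0` outside the vertex set). -/
noncomputable def DVal (n : ℕ) (p : BV → ℚ) (π : DV → DV) : DV → ℚ :=
  if h : ∃! V : DV → ℚ, IsDVal n p π V ∧ ∀ u, ¬ IsDVertex n u → V u = 0 then
    h.exists.choose
  else fun _ => 0

/-- The reduced costs of an agent edge `(u,u')` of `𝔇_n` w.r.t. the policy `π`. -/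
noncomputable def zD (n : ℕ) (p : BV → ℚ) (π : DV → DV) (u u' : DV) : ℚ :=
  rD n u u' + DVal n p π u' - DVal n p π u

/-- An agent edge of `𝔇_n` is an improving switch if its reduced costs are positive. -/
def DImproving (n : ℕ) (p : BV → ℚ) (π : DV → DV) (u u' : DV) : Prop :=
  DEdge n u u' ∧ 0 < zD n p π u u'

/-- One (agent or positive-probability randomization) step of the process `𝔇_n` under `π`. -/
def DStep (n : ℕ) (p : BV → ℚ) (π : DV → DV) (u u' : DV) : Prop :=
  (IsDAgent n u ∧ u' = π u) ∨
  (∃ v w, DEdgePair n v w ∧ u = DV.y v w ∧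
    ((u' = DV.z v w ∧ 0 < p v) ∨ (u' = DV.base v ∧ 0 < 1 - p v)))

/-- A policy for `𝔇_n` is weak unichain if it reaches `s` with probability one from every
vertex, i.e. `s` is reachable via active/positive-probability steps from every vertex. -/
def DWeakUnichain (n : ℕ) (p : BV → ℚ) (π : DV → DV) : Prop :=
  ∀ u, IsDVertex n u → Relation.ReflTransGen (DStep n p π) u (DV.base BV.s)

/-- The twin policy of a policy `π` for `𝔅_n`: every vertex `v ≠ s` is `π v`-oriented. -/
def twin (π : BV → BV) : DV → DV := fun u =>
  match u with
  | DV.base v => if v = BV.s then DV.base BV.s else DV.x v (π v)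
  | DV.x v w => if w = π v then DV.y v w else DV.base v
  | DV.y v w => DV.y v w
  | DV.z _ w => DV.base w

/-- The vertex numbering `𝒩_V` of `𝔅_n`: the order `(t, a 1, b 1, a 2, b 2, …, a n, b n, d, s)`. -/
def NV (n : ℕ) : BV → ℕ
  | BV.t => 1
  | BV.a i => 2 * i
  | BV.b i => 2 * i + 1
  | BV.d => 2 * n + 2
  | BV.s => 2 * n + 3

/-- The specific probabilities `p_v = 2^{-𝒩_V(v)·(n+5)}`. -/
noncomputable def pSpec (n : ℕ) (v : BV) : ℚ := (2 : ℚ) ^ (-((NV n v * (n + 5) : ℕ) : ℤ))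

/-- The set `B(v)` of agent edges of `𝔇_n` belonging to the vertex `v`. -/
def Belongs (n : ℕ) (v : BV) (e : DV × DV) : Prop :=
  ∃ w, DEdgePair n v w ∧
    (e = (DV.x v w, DV.y v w) ∨ e = (DV.base v, DV.x v w) ∨ e = (DV.x v w, DV.base v))

/-- Applying the improving switch `e` to the policy `π` yields `π'`. -/
def DApply (n : ℕ) (p : BV → ℚ) (π : DV → DV) (e : DV × DV) (π' : DV → DV) : Prop :=
  DImproving n p π e.1 e.2 ∧ π' = Function.update π e.1 e.2

/-- One step of Bland's policy iteration on `𝔇_n` with edge numbering `N`. -/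
def IsBlandStepD (n : ℕ) (p : BV → ℚ) (N : DV → DV → ℕ) (π π' : DV → DV) : Prop :=
  ∃ u u', DImproving n p π u u' ∧ (∀ a b, DImproving n p π a b → N u u' ≤ N a b) ∧
    π' = Function.update π u u'

/-- One step of Dantzig's policy iteration on `𝔇_n`: apply an improving switch of maximal
reduced costs. -/
def DantzigStep (n : ℕ) (p : BV → ℚ) (π π' : DV → DV) : Prop :=
  ∃ u u', DImproving n p π u u' ∧
    (∀ a b, DImproving n p π a b → zD n p π a b ≤ zD n p π u u') ∧
    π' = Function.update π u u'

/-- The finite set of vertices of `𝔅_n`, as a `Finset`. -/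
noncomputable def BVSet (n : ℕ) : Finset BV :=
  {BV.t, BV.d, BV.s} ∪ (Finset.Icc 1 n).image BV.a ∪ (Finset.Icc 1 n).image BV.b

/-- The finite set of agent vertices of `𝔇_n`, as a `Finset`. -/
noncomputable def DAgentSet (n : ℕ) : Finset DV := by
  classical
  exact ((BVSet n).image DV.base) ∪
    (((BVSet n ×ˢ BVSet n).filter fun e => DEdgePair n e.1 e.2).image fun e => DV.x e.1 e.2) ∪
    (((BVSet n ×ˢ BVSet n).filter fun e => DEdgePair n e.1 e.2).image fun e => DV.z e.1 e.2)

/-- The objective of the Largest Increase rule: the sum of the values of all agent vertices. -/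
noncomputable def LIobj (n : ℕ) (p : BV → ℚ) (π : DV → DV) : ℚ :=
  ∑ u ∈ DAgentSet n, DVal n p π u

/-- One step of the Largest Increase policy iteration on `𝔇_n`: apply an improving switch
maximizing the sum of all agent vertex values of the resulting policy. -/
def LIStep (n : ℕ) (p : BV → ℚ) (π π' : DV → DV) : Prop :=
  ∃ u u', DImproving n p π u u' ∧
    (∀ a b, DImproving n p π a b →
      LIobj n p (Function.update π a b) ≤ LIobj n p (Function.update π u u')) ∧
    π' = Function.update π u u'

/-- `N` is a Bland numbering `𝒩_{𝔇_n}` for `𝔇_n`: it is injective on agent edges, the edges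
`(x v w, v)` all come first, within each gadget `(x v w, y v w)` precedes `(v, x v w)`,
the gadget blocks are ordered according to `𝒩_{𝔅_n}`, and the self-loop comes last. -/
def IsDBlandNumbering (n : ℕ) (N : DV → DV → ℕ) : Prop :=
  (∀ u₁ u₂ u₁' u₂', DEdge n u₁ u₂ → DEdge n u₁' u₂' → N u₁ u₂ = N u₁' u₂' →
    u₁ = u₁' ∧ u₂ = u₂') ∧
  (∀ v w v' w', DEdgePair n v w → DEdgePair n v' w' →
    N (DV.x v w) (DV.base v) < N (DV.x v' w') (DV.y v' w')) ∧
  (∀ v w, DEdgePair n v w → N (DV.x v w) (DV.y v w) < N (DV.base v) (DV.x v w)) ∧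
  (∀ v w v' w', DEdgePair n v w → DEdgePair n v' w' → NB n v w < NB n v' w' →
    N (DV.base v) (DV.x v w) < N (DV.x v' w') (DV.y v' w')) ∧
  (∀ v w, DEdgePair n v w → N (DV.base v) (DV.x v w) < N (DV.base BV.s) (DV.base BV.s))

/-!
Under the twin policy of `π`, one passage through a gadget only delays the move from `v` to `π v`,
so `v` keeps its value and the only reduced costs that can be nonzero are those of the edges
`(x v w, y v w)`, which are `p v` times the reduced costs of `(v, w)`. Hence a policy without
improving switches has a twin without improving switches. Such a twin is optimal: its value function
dominates the one-step payoff of every policy, and by the maximum principle for absorbing Markov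
chains it then dominates the value functions. For `π_*` the absence of improving switches is read
off the closed form of its values.
-/

/-! ### Absorbing Markov chains -/

section MarkovChain

variable {α K : Type*}

section CommRing

variable [CommRing K]

/-- The one-step expectation operator `f ↦ P f` of a transition kernel `P` whose rows have finite
support; `P u u'` is the probability of moving from `u` to `u'`. -/
def stepExpectation (P : α → α →₀ K) : (α → K) →ₗ[K] (α → K) where
  toFun f u := (P u).sum fun u' c ↦ c * f u'
  map_add' f g := by
    ext u
    simp only [Pi.add_apply, mul_add, Finsupp.sum_add]
  map_smul' a f := by
    ext u
    simp only [Pi.smul_apply, smul_eq_mul, RingHom.id_apply, Finsupp.mul_sum, mul_left_comm]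

/-- `V` is the expected total reward collected before reaching `s` in the chain `P` on `S` that
pays `r u` for leaving `u`, described by the Bellman equations off `s` and `V s = 0`. -/
def IsValueOn (P : α → α →₀ K) (S : Set α) (s : α) (r V : α → K) : Prop :=
  V s = 0 ∧ ∀ u ∈ S, u ≠ s → V u = r u + stepExpectation P V u

variable [LinearOrder K]

/-- The kernel `P` is a Markov chain on the state set `S`: its rows at states in `S` are probability
vectors, and no step leads out of `S`. The mass condition is stated as `P 1 = 1` on `S`. -/
structure IsMarkovOn (P : α → α →₀ K) (S : Set α) : Prop where
  nonneg : ∀ u ∈ S, 0 ≤ P u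
  stepExpectation_one : ∀ u ∈ S, stepExpectation P 1 u = 1
  mem_of_pos : ∀ u ∈ S, ∀ u', 0 < P u u' → u' ∈ S

/-- `P` is a finite Markov chain on `S` that reaches `s` from every state almost surely. Such a
chain is only observed until it hits `s`, so the row of `P` at `s` is not required to stay there. -/
structure IsAbsorbingOn (P : α → α →₀ K) (S : Set α) (s : α) : Prop extends IsMarkovOn P S where
  finite : S.Finite
  sink_mem : s ∈ S
  reaches : ∀ u ∈ S, Relation.ReflTransGen (fun u u' ↦ 0 < P u u') u s

variable [IsStrictOrderedRing K] {P : α → α →₀ K} {S : Set α} {s : α}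

theorem IsMarkovOn.eq_of_isMaxOn (hP : IsMarkovOn P S) {f : α → K} {u : α} (hu : u ∈ S)
    (hmax : IsMaxOn f S u) (hf : f u ≤ stepExpectation P f u) {u' : α} (huu' : 0 < P u u') :
    f u' = f u := by
  have hterm : ∀ v ∈ (P u).support, 0 ≤ P u v * (f u - f v) := fun v hv ↦ by
    have hpos : 0 < P u v := (hP.nonneg u hu v).lt_of_ne' (Finsupp.mem_support_iff.1 hv)
    exact mul_nonneg hpos.le (sub_nonneg.2 (hmax (hP.mem_of_pos u hu v hpos)))
  have hsum : ∑ v ∈ (P u).support, P u v * (f u - f v) = 0 := by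
    refine le_antisymm ?_ (Finset.sum_nonneg hterm)
    calc ∑ v ∈ (P u).support, P u v * (f u - f v)
        = stepExpectation P (f u • 1 - f) u := by simp [stepExpectation, Finsupp.sum]
      _ = f u - stepExpectation P f u := by
        simp [map_sub, map_smul, hP.stepExpectation_one u hu]
      _ ≤ 0 := sub_nonpos.2 hf
  have hzero := (Finset.sum_eq_zero_iff_of_nonneg hterm).1 hsum u'
    (Finsupp.mem_support_iff.2 huu'.ne')
  exact (sub_eq_zero.1 ((mul_eq_zero.1 hzero).resolve_left huu'.ne')).symm

namespace IsAbsorbingOn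

theorem le_of_le_stepExpectation (hP : IsAbsorbingOn P S s) {f : α → K}
    (hf : ∀ u ∈ S, u ≠ s → f u ≤ stepExpectation P f u) {u : α} (hu : u ∈ S) : f u ≤ f s := by
  obtain ⟨m, hm, hmax⟩ := Set.exists_max_image S f hP.finite ⟨u, hu⟩
  suffices hmaxle : ∀ v, Relation.ReflTransGen (fun u u' ↦ 0 < P u u') v s → v ∈ S →
      IsMaxOn f S v → f v ≤ f s from (hmax u hu).trans (hmaxle m (hP.reaches m hm) hm hmax)
  intro v hv
  induction hv using Relation.ReflTransGen.head_induction_on with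
  | refl => exact fun _ _ ↦ le_rfl
  | @head v v' hstep _ ih =>
    intro hvS hvmax
    rcases eq_or_ne v s with rfl | hvs
    · exact le_rfl
    · have heq : f v' = f v := hP.eq_of_isMaxOn hvS hvmax (hf v hvS hvs) hstep
      rw [← heq]
      exact ih (hP.mem_of_pos v hvS v' hstep) fun w hw ↦ heq ▸ hvmax hw

theorem le_of_bellman_le (hP : IsAbsorbingOn P S s) {r V W : α → K}
    (hs : V s ≤ W s) (hV : ∀ u ∈ S, u ≠ s → V u ≤ r u + stepExpectation P V u)
    (hW : ∀ u ∈ S, u ≠ s → r u + stepExpectation P W u ≤ W u) {u : α} (hu : u ∈ S) :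
    V u ≤ W u := by
  have hsub : ∀ u ∈ S, u ≠ s → (V - W) u ≤ stepExpectation P (V - W) u := fun u hu hus ↦ by
    rw [map_sub, Pi.sub_apply, Pi.sub_apply]
    linarith [hV u hu hus, hW u hu hus]
  have hle := hP.le_of_le_stepExpectation hsub hu
  simp only [Pi.sub_apply] at hle
  linarith

theorem eqOn_of_isValueOn (hP : IsAbsorbingOn P S s) {r V W : α → K}
    (hV : IsValueOn P S s r V) (hW : IsValueOn P S s r W) : Set.EqOn V W S := fun _ hu ↦
  le_antisymm
    (hP.le_of_bellman_le (hV.1.trans hW.1.symm).le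
      (fun v hv hvs ↦ (hV.2 v hv hvs).le) (fun v hv hvs ↦ (hW.2 v hv hvs).ge) hu)
    (hP.le_of_bellman_le (hW.1.trans hV.1.symm).le
      (fun v hv hvs ↦ (hW.2 v hv hvs).le) (fun v hv hvs ↦ (hV.2 v hv hvs).ge) hu)

end IsAbsorbingOn

end CommRing

open Classical in
-- The Bellman equations form a square linear system on `S`; its uniqueness gives existence.
theorem IsAbsorbingOn.exists_isValueOn [Field K] [LinearOrder K] [IsStrictOrderedRing K]
    {P : α → α →₀ K} {S : Set α} {s : α} (hP : IsAbsorbingOn P S s) (r : α → K) :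
    ∃ V, IsValueOn P S s r V ∧ ∀ u ∉ S, V u = 0 := by
  have : Finite S := hP.finite
  let extend : (S → K) →ₗ[K] (α → K) := Function.ExtendByZero.linearMap K Subtype.val
  have extend_mem (g : S → K) (u : S) : extend g u = g u :=
    Subtype.val_injective.extend_apply g 0 u
  have extend_notMem (g : S → K) {u : α} (hu : u ∉ S) : extend g u = 0 :=
    Function.extend_apply' g (0 : α → K) u fun ⟨v, hv⟩ ↦ hu (hv ▸ v.2)
  let bellman : (S → K) →ₗ[K] (S → K) := LinearMap.pi fun u ↦ LinearMap.proj u -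
    if (u : α) = s then 0 else LinearMap.proj (u : α) ∘ₗ stepExpectation P ∘ₗ extend
  have bellman_apply (g : S → K) (u : S) :
      bellman g u = g u - if (u : α) = s then 0 else stepExpectation P (extend g) u := by
    simp only [bellman, LinearMap.pi_apply, LinearMap.sub_apply, LinearMap.proj_apply]
    split_ifs <;> rfl
  have isValueOn_extend {g : S → K} {r : α → K}
      (hg : ∀ u, bellman g u = if (u : α) = s then 0 else r u) : IsValueOn P S s r (extend g) := by
    refine ⟨?_, fun u hu hus ↦ ?_⟩
    · simpa [bellman_apply, extend_mem g ⟨s, hP.sink_mem⟩] using hg ⟨s, hP.sink_mem⟩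
    · have hgu := hg ⟨u, hu⟩
      simp only [bellman_apply, hus, if_false] at hgu
      rw [extend_mem g ⟨u, hu⟩, ← hgu, sub_add_cancel]
  have hinj : Function.Injective bellman := (injective_iff_map_eq_zero _).2 fun g hg ↦ by
    have hg_value : IsValueOn P S s 0 (extend g) := isValueOn_extend fun u ↦ by simp [hg]
    have zero_value : IsValueOn P S s 0 (0 : α → K) := ⟨rfl, fun u _ _ ↦ by simp⟩
    ext u
    rw [← extend_mem g u, hP.eqOn_of_isValueOn hg_value zero_value u.2]
    rfl
  obtain ⟨g, hg⟩ := LinearMap.surjective_of_injective hinj fun u ↦ if (u : α) = s then 0 else r u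
  exact ⟨extend g, isValueOn_extend (congrFun hg), fun u hu ↦ extend_notMem g hu⟩

end MarkovChain

/-! ### Values in `𝔅_n` -/

section BaseProcess

variable {n : ℕ} {π : BV → BV} {v w : BV}

theorem isBVertex_aN {i : ℕ} (hi : 1 ≤ i) (hin : i ≤ n + 1) : IsBVertex n (aN n i) := by
  unfold aN
  split_ifs with h
  · trivial
  · exact ⟨hi, by omega⟩

theorem isBVertex_bN {i : ℕ} (hi : 1 ≤ i) (hin : i ≤ n + 1) : IsBVertex n (bN n i) := by
  unfold bN
  split_ifs with h
  · trivial
  · exact ⟨hi, by omega⟩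

theorem BEdge.isBVertex_left (h : BEdge n v w) : IsBVertex n v := by
  rcases h with ⟨i, -, -, rfl, -⟩ | ⟨i, h1, hn, rfl, -⟩ | ⟨i, h1, hn, rfl, -⟩ |
    ⟨i, h1, hn, rfl, -⟩ | ⟨i, h1, hn, rfl, -⟩ | ⟨i, h1, hn, rfl, -⟩ | ⟨rfl, -⟩ | ⟨rfl, -⟩ <;>
  first | exact ⟨h1, hn⟩ | trivial

theorem BEdge.isBVertex_right (h : BEdge n v w) : IsBVertex n w := by
  rcases h with ⟨i, h1, hn, -, rfl⟩ | ⟨i, h1, hn, -, rfl⟩ | ⟨i, h1, hn, -, rfl⟩ |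
    ⟨i, -, -, -, rfl⟩ | ⟨i, h1, hn, -, rfl⟩ | ⟨i, h1, hn, -, rfl⟩ | ⟨-, rfl⟩ | ⟨-, rfl⟩
  · exact ⟨h1, hn⟩
  · exact ⟨h1, hn⟩
  · exact isBVertex_aN (by omega) (by omega)
  · trivial
  · exact isBVertex_bN (by omega) (by omega)
  · exact isBVertex_aN (by omega) (by omega)
  · trivial
  · trivial

theorem BEdge.eq_sink (h : BEdge n BV.s w) : w = BV.s := by
  simpa [BEdge] using h

theorem finite_setOf_isBVertex (n : ℕ) : {v | IsBVertex n v}.Finite := by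
  refine (BVSet n).finite_toSet.subset fun v hv ↦ ?_
  cases v <;> simp_all [IsBVertex, BVSet]

theorem BVal_sink (n : ℕ) (π : BV → BV) : BVal n π BV.s = 0 := by
  classical
  have hex : ∃ k, π^[k] BV.s = BV.s := ⟨0, rfl⟩
  rw [BVal, dif_pos hex, (Nat.find_eq_zero hex).2 rfl, Finset.sum_range_zero]

theorem BVal_eq_of_ne_sink (hreach : ∃ k, π^[k] v = BV.s) (hv : v ≠ BV.s) :
    BVal n π v = rB n v (π v) + BVal n π (π v) := by
  classical
  have hreach' : ∃ k, π^[k] (π v) = BV.s := by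
    obtain ⟨_ | k, hk⟩ := hreach
    · exact absurd hk hv
    · exact ⟨k, hk⟩
  have hfind : Nat.find hreach = Nat.find hreach' + 1 := Nat.find_comp_succ hreach hreach' hv
  rw [BVal, BVal, dif_pos hreach, dif_pos hreach', hfind, Finset.sum_range_succ', add_comm]
  rfl

theorem zB_self (hπ : IsBPolicy n π) (hu : BWeakUnichain n π) (hv : IsBVertex n v) :
    zB n π v (π v) = 0 := by
  rw [zB, sub_eq_zero]
  rcases eq_or_ne v BV.s with rfl | hvs
  · rw [(hπ BV.s hv).eq_sink]
    exact zero_add _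
  · exact (BVal_eq_of_ne_sink (hu v hv) hvs).symm

theorem bWeakUnichain_of_rank_lt (hπ : IsBPolicy n π) (rank : BV → ℕ)
    (hrank : ∀ v, IsBVertex n v → v ≠ BV.s → rank (π v) < rank v) : BWeakUnichain n π := by
  intro v hv
  induction hm : rank v using Nat.strong_induction_on generalizing v with
  | _ m ih =>
    rcases eq_or_ne v BV.s with rfl | hvs
    · exact ⟨0, rfl⟩
    · obtain ⟨k, hk⟩ := ih _ (hm ▸ hrank v hv hvs) (π v) (hπ v hv).isBVertex_right rfl
      exact ⟨k + 1, hk⟩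

end BaseProcess

/-! ### Values and optimality in `𝔇_n` -/

section GadgetProcess

variable {n : ℕ} {p : BV → ℚ} {π : DV → DV} {u u' : DV} {v w : BV}

theorem DEdge.isDAgent_left (h : DEdge n u u') : IsDAgent n u := by
  rcases h with ⟨v, w, hvw, ⟨rfl, -⟩ | ⟨rfl, -⟩ | ⟨rfl, -⟩ | ⟨rfl, -⟩⟩ | ⟨rfl, -⟩
  · exact hvw.1.isBVertex_left
  · exact hvw
  · exact hvw
  · exact hvw
  · trivial

theorem DEdge.isDVertex_right (h : DEdge n u u') : IsDVertex n u' := by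
  rcases h with ⟨v, w, hvw, ⟨-, rfl⟩ | ⟨-, rfl⟩ | ⟨-, rfl⟩ | ⟨-, rfl⟩⟩ | ⟨-, rfl⟩
  · exact hvw
  · exact hvw.1.isBVertex_left
  · exact hvw
  · exact hvw.1.isBVertex_right
  · trivial

theorem DEdge.eq_sink (h : DEdge n (DV.base BV.s) u') : u' = DV.base BV.s := by
  rcases h with ⟨v, w, hvw, ⟨h, -⟩ | ⟨h, -⟩ | ⟨h, -⟩ | ⟨h, -⟩⟩ | ⟨-, h⟩
  · exact absurd (DV.base.inj h).symm hvw.2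
  · cases h
  · cases h
  · cases h
  · exact h

theorem IsDAgent.isDVertex (h : IsDAgent n u) : IsDVertex n u := by
  cases u with
  | y v w => exact h.elim
  | _ => exact h

theorem IsDVertex.isDAgent_or_eq_y (h : IsDVertex n u) :
    IsDAgent n u ∨ ∃ v w, DEdgePair n v w ∧ u = DV.y v w := by
  cases u with
  | y v w => exact .inr ⟨v, w, h, rfl⟩
  | _ => exact .inl h

theorem finite_setOf_isDVertex (n : ℕ) : {u | IsDVertex n u}.Finite := by
  have hB := finite_setOf_isBVertex n
  have hpairs := hB.prod hB
  refine (((hB.image DV.base).union (hpairs.image (Function.uncurry DV.x))).union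
    ((hpairs.image (Function.uncurry DV.y)).union
      (hpairs.image (Function.uncurry DV.z)))).subset fun u hu ↦ ?_
  cases u with
  | base v => exact .inl (.inl ⟨v, hu, rfl⟩)
  | x v w => exact .inl (.inr ⟨(v, w), ⟨hu.1.isBVertex_left, hu.1.isBVertex_right⟩, rfl⟩)
  | y v w => exact .inr (.inl ⟨(v, w), ⟨hu.1.isBVertex_left, hu.1.isBVertex_right⟩, rfl⟩)
  | z v w => exact .inr (.inr ⟨(v, w), ⟨hu.1.isBVertex_left, hu.1.isBVertex_right⟩, rfl⟩)

/-- The transition kernel of the Markov chain that the policy `π` induces on `𝔇_n`. -/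
noncomputable def transition (p : BV → ℚ) (π : DV → DV) : DV → DV →₀ ℚ
  | DV.y v w => Finsupp.single (DV.z v w) (p v) + Finsupp.single (DV.base v) (1 - p v)
  | u => Finsupp.single (π u) 1

theorem transition_of_isDAgent (hu : IsDAgent n u) :
    transition p π u = Finsupp.single (π u) 1 := by
  cases u with
  | y v w => exact hu.elim
  | _ => rfl

theorem stepExpectation_transition_of_isDAgent (hu : IsDAgent n u) (V : DV → ℚ) :
    stepExpectation (transition p π) V u = V (π u) := by
  simp [stepExpectation, transition_of_isDAgent hu]

theorem stepExpectation_transition_y (V : DV → ℚ) :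
    stepExpectation (transition p π) V (DV.y v w) =
      p v * V (DV.z v w) + (1 - p v) * V (DV.base v) := by
  calc stepExpectation (transition p π) V (DV.y v w)
      = (Finsupp.single (DV.z v w) (p v)).sum (fun u' c ↦ c * V u') +
        (Finsupp.single (DV.base v) (1 - p v)).sum (fun u' c ↦ c * V u') :=
      Finsupp.sum_add_index' (h := fun u' c ↦ c * V u') (fun _ ↦ zero_mul _)
        fun _ _ _ ↦ add_mul _ _ _
    _ = p v * V (DV.z v w) + (1 - p v) * V (DV.base v) := by
      rw [Finsupp.sum_single_index (zero_mul _), Finsupp.sum_single_index (zero_mul _)]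

theorem isMarkovOn_transition (hp : ∀ v, IsBVertex n v → v ≠ BV.s → 0 < p v ∧ p v ≤ 1)
    (hπ : IsDPolicy n π) : IsMarkovOn (transition p π) {u | IsDVertex n u} where
  nonneg u hu := by
    rcases hu.isDAgent_or_eq_y with hu | ⟨v, w, hvw, rfl⟩
    · rw [transition_of_isDAgent hu]
      exact Finsupp.single_nonneg.2 zero_le_one
    · obtain ⟨hpos, hle⟩ := hp v hvw.1.isBVertex_left hvw.2
      exact add_nonneg (Finsupp.single_nonneg.2 hpos.le)
        (Finsupp.single_nonneg.2 (sub_nonneg.2 hle))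
  stepExpectation_one u hu := by
    rcases hu.isDAgent_or_eq_y with hu | ⟨v, w, -, rfl⟩
    · exact stepExpectation_transition_of_isDAgent hu 1
    · rw [stepExpectation_transition_y]
      simp only [Pi.one_apply, mul_one, add_sub_cancel]
  mem_of_pos u hu u' hpos := by
    contrapose! hpos
    rcases hu.isDAgent_or_eq_y with hu | ⟨v, w, hvw, rfl⟩
    · rw [transition_of_isDAgent hu, Finsupp.single_eq_of_ne]
      rintro rfl
      exact hpos (hπ u hu).isDVertex_right
    · have hz : u' ≠ DV.z v w := by
        rintro rfl
        exact hpos hvw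
      have hbase : u' ≠ DV.base v := by
        rintro rfl
        exact hpos hvw.1.isBVertex_left
      simp [transition, hz, hbase]

theorem DStep.transition_pos (h : DStep n p π u u') : 0 < transition p π u u' := by
  rcases h with ⟨hu, rfl⟩ | ⟨v, w, -, rfl, ⟨rfl, hpos⟩ | ⟨rfl, hpos⟩⟩
  · simp [transition_of_isDAgent hu]
  · simpa [transition] using hpos
  · simpa [transition] using hpos

theorem isDVal_iff_isValueOn (hπ : IsDPolicy n π) {V : DV → ℚ} :
    IsDVal n p π V ↔ IsValueOn (transition p π) {u | IsDVertex n u} (DV.base BV.s)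
      (fun u ↦ rD n u (π u)) V := by
  refine and_congr_right fun _ ↦ ⟨fun ⟨hagent, hrand⟩ u hu _ ↦ ?_, fun h ↦ ⟨fun u hu ↦ ?_,
    fun v w hvw ↦ ?_⟩⟩
  · rcases hu.isDAgent_or_eq_y with hu | ⟨v, w, hvw, rfl⟩
    · rw [stepExpectation_transition_of_isDAgent hu]
      exact hagent u hu
    · rw [stepExpectation_transition_y, hrand v w hvw]
      exact (zero_add _).symm
  · rcases eq_or_ne u (DV.base BV.s) with rfl | hus
    · rw [(hπ _ hu).eq_sink]
      exact (zero_add _).symm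
    · rw [h u hu.isDVertex hus, stepExpectation_transition_of_isDAgent hu]
  · rw [h (DV.y v w) hvw (by simp), stepExpectation_transition_y]
    exact zero_add _

theorem isAbsorbingOn_transition (hp : ∀ v, IsBVertex n v → v ≠ BV.s → 0 < p v ∧ p v ≤ 1)
    (hπ : IsDPolicy n π) (hu : DWeakUnichain n p π) :
    IsAbsorbingOn (transition p π) {u | IsDVertex n u} (DV.base BV.s) where
  toIsMarkovOn := isMarkovOn_transition hp hπ
  finite := finite_setOf_isDVertex n
  sink_mem := trivial
  reaches u huv := Relation.ReflTransGen.mono (fun _ _ ↦ DStep.transition_pos) _ _ (hu u huv)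

theorem eqOn_of_isDVal (hp : ∀ v, IsBVertex n v → v ≠ BV.s → 0 < p v ∧ p v ≤ 1)
    (hπ : IsDPolicy n π) (hu : DWeakUnichain n p π) {V W : DV → ℚ} (hV : IsDVal n p π V)
    (hW : IsDVal n p π W) : Set.EqOn V W {u | IsDVertex n u} :=
  (isAbsorbingOn_transition hp hπ hu).eqOn_of_isValueOn ((isDVal_iff_isValueOn hπ).1 hV)
    ((isDVal_iff_isValueOn hπ).1 hW)

theorem isDVal_DVal (hp : ∀ v, IsBVertex n v → v ≠ BV.s → 0 < p v ∧ p v ≤ 1)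
    (hπ : IsDPolicy n π) (hu : DWeakUnichain n p π) : IsDVal n p π (DVal n p π) := by
  have hunique : ∃! V : DV → ℚ, IsDVal n p π V ∧ ∀ u, ¬ IsDVertex n u → V u = 0 := by
    obtain ⟨V, hbellman, hV0⟩ :=
      (isAbsorbingOn_transition hp hπ hu).exists_isValueOn fun u ↦ rD n u (π u)
    have hV : IsDVal n p π V := (isDVal_iff_isValueOn hπ).2 hbellman
    refine ⟨V, ⟨hV, hV0⟩, fun W ⟨hW, hW0⟩ ↦ funext fun u ↦ ?_⟩
    by_cases huv : IsDVertex n u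
    · exact eqOn_of_isDVal hp hπ hu hW hV huv
    · rw [hW0 u huv, hV0 u huv]
  rw [DVal, dif_pos hunique]
  exact hunique.exists.choose_spec.1

theorem DVal_le_DVal_of_not_dImproving
    (hp : ∀ v, IsBVertex n v → v ≠ BV.s → 0 < p v ∧ p v ≤ 1) {σ : DV → DV}
    (hσ : IsDPolicy n σ) (hσu : DWeakUnichain n p σ) (hopt : ∀ u u', ¬ DImproving n p σ u u')
    (hπ : IsDPolicy n π) (hu : DWeakUnichain n p π) (huv : IsDVertex n u) :
    DVal n p π u ≤ DVal n p σ u := by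
  have hvalπ := (isDVal_iff_isValueOn hπ).1 (isDVal_DVal hp hπ hu)
  have hvalσ := isDVal_DVal hp hσ hσu
  refine (isAbsorbingOn_transition hp hπ hu).le_of_bellman_le
    (r := fun u ↦ rD n u (π u)) (hvalπ.1.trans hvalσ.1.symm).le
    (fun v hv hvs ↦ (hvalπ.2 v hv hvs).le) (fun v hv _ ↦ ?_) huv
  rcases hv.isDAgent_or_eq_y with hv | ⟨v, w, hvw, rfl⟩
  · have hcost : zD n p σ v (π v) ≤ 0 := not_lt.1 fun h ↦ hopt v (π v) ⟨hπ v hv, h⟩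
    rw [stepExpectation_transition_of_isDAgent hv]
    exact sub_nonpos.1 hcost
  · rw [stepExpectation_transition_y, hvalσ.2.2 v w hvw]
    exact (zero_add _).le

end GadgetProcess

/-! ### Twin policies -/

section Twin

variable {n : ℕ} {p : BV → ℚ} {π : BV → BV} {v w : BV}

theorem isDPolicy_twin (hπ : IsBPolicy n π) : IsDPolicy n (twin π) := by
  intro u hu
  cases u with
  | base v =>
    rcases eq_or_ne v BV.s with rfl | hv
    · exact .inr ⟨rfl, rfl⟩
    · exact .inl ⟨v, π v, ⟨hπ v hu, hv⟩, .inl ⟨rfl, if_neg hv⟩⟩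
  | x v w =>
    by_cases hw : w = π v
    · exact .inl ⟨v, w, hu, .inr (.inr (.inl ⟨rfl, if_pos hw⟩))⟩
    · exact .inl ⟨v, w, hu, .inr (.inl ⟨rfl, if_neg hw⟩)⟩
  | y v w => exact hu.elim
  | z v w => exact .inl ⟨v, w, hu, .inr (.inr (.inr ⟨rfl, rfl⟩))⟩

theorem reflTransGen_dStep_twin_y (hp : 0 < p v) (hvw : DEdgePair n v w) :
    Relation.ReflTransGen (DStep n p (twin π)) (DV.y v w) (DV.base w) :=
  .head (.inr ⟨v, w, hvw, rfl, .inl ⟨rfl, hp⟩⟩) (.single (.inl ⟨hvw, rfl⟩))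

theorem reflTransGen_dStep_twin_base (hp : 0 < p v) (h : DEdgePair n v (π v)) :
    Relation.ReflTransGen (DStep n p (twin π)) (DV.base v) (DV.base (π v)) :=
  .head (.inl ⟨h.1.isBVertex_left, (if_neg h.2).symm⟩) <|
    .head (.inl ⟨h, (if_pos rfl).symm⟩) (reflTransGen_dStep_twin_y hp h)

theorem reflTransGen_dStep_twin_base_sink (hp : ∀ v, IsBVertex n v → v ≠ BV.s → 0 < p v)
    (hπ : IsBPolicy n π) (hv : IsBVertex n v) (hreach : ∃ k, π^[k] v = BV.s) :
    Relation.ReflTransGen (DStep n p (twin π)) (DV.base v) (DV.base BV.s) := by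
  obtain ⟨k, hk⟩ := hreach
  induction k generalizing v with
  | zero => exact hk ▸ .refl
  | succ k ih =>
    rcases eq_or_ne v BV.s with rfl | hvs
    · exact .refl
    · exact (reflTransGen_dStep_twin_base (hp v hv hvs) ⟨hπ v hv, hvs⟩).trans
        (ih (hπ v hv).isBVertex_right hk)

theorem dWeakUnichain_twin (hp : ∀ v, IsBVertex n v → v ≠ BV.s → 0 < p v)
    (hπ : IsBPolicy n π) (hu : BWeakUnichain n π) : DWeakUnichain n p (twin π) := by
  have hbase {v : BV} (hv : IsBVertex n v) :
      Relation.ReflTransGen (DStep n p (twin π)) (DV.base v) (DV.base BV.s) :=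
    reflTransGen_dStep_twin_base_sink hp hπ hv (hu v hv)
  have hy {v w : BV} (hvw : DEdgePair n v w) :
      Relation.ReflTransGen (DStep n p (twin π)) (DV.y v w) (DV.base BV.s) :=
    (reflTransGen_dStep_twin_y (hp v hvw.1.isBVertex_left hvw.2) hvw).trans
      (hbase hvw.1.isBVertex_right)
  intro u huv
  cases u with
  | base v => exact hbase huv
  | x v w =>
    by_cases hw : w = π v
    · exact .head (.inl ⟨huv, (if_pos hw).symm⟩) (hy huv)
    · exact .head (.inl ⟨huv, (if_neg hw).symm⟩) (hbase huv.1.isBVertex_left)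
  | y v w => exact hy huv
  | z v w => exact .head (.inl ⟨huv, rfl⟩) (hbase huv.1.isBVertex_right)

/-- The value function of `twin π` in terms of the values and reduced costs of `π`. -/
noncomputable def twinVal (n : ℕ) (p : BV → ℚ) (π : BV → BV) : DV → ℚ
  | DV.base v => BVal n π v
  | DV.x v _ => BVal n π v
  | DV.y v w => BVal n π v + p v * zB n π v w
  | DV.z v w => rB n v w + BVal n π w

theorem isDVal_twinVal (hπ : IsBPolicy n π) (hu : BWeakUnichain n π) :
    IsDVal n p (twin π) (twinVal n p π) := by
  refine ⟨BVal_sink n π, fun u huv ↦ ?_, fun v w _ ↦ ?_⟩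
  · cases u with
    | base v =>
      rcases eq_or_ne v BV.s with rfl | hv
      · simp [twin, rD]
      · simp [twin, hv, rD, twinVal]
    | x v w =>
      by_cases hw : w = π v
      · simp [twin, hw, rD, twinVal, zB_self hπ hu huv.1.isBVertex_left]
      · simp [twin, hw, rD, twinVal]
    | y v w => exact huv.elim
    | z v w => simp [twin, rD, twinVal]
  · simp only [twinVal, zB]
    ring

theorem not_dImproving_twin (hp : ∀ v, IsBVertex n v → v ≠ BV.s → 0 < p v ∧ p v ≤ 1)
    (hπ : IsBPolicy n π) (hu : BWeakUnichain n π) (hopt : ∀ v w, ¬ BImproving n π v w)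
    (u u' : DV) : ¬ DImproving n p (twin π) u u' := by
  rintro ⟨h, hcost⟩
  have hD := isDPolicy_twin hπ
  have hDu := dWeakUnichain_twin (fun v hv hvs ↦ (hp v hv hvs).1) hπ hu
  have hval : Set.EqOn (DVal n p (twin π)) (twinVal n p π) {u | IsDVertex n u} :=
    eqOn_of_isDVal hp hD hDu (isDVal_DVal hp hD hDu) (isDVal_twinVal hπ hu)
  rw [zD, hval h.isDAgent_left.isDVertex, hval h.isDVertex_right] at hcost
  rcases h with ⟨v, w, hvw, ⟨rfl, rfl⟩ | ⟨rfl, rfl⟩ | ⟨rfl, rfl⟩ | ⟨rfl, rfl⟩⟩ | ⟨rfl, rfl⟩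
  · simp [rD, twinVal] at hcost
  · simp [rD, twinVal] at hcost
  · have hpv := (hp v hvw.1.isBVertex_left hvw.2).1
    have hz : 0 < zB n π v w := by simpa [rD, twinVal, hpv] using hcost
    exact hopt v w ⟨hvw.1, hz⟩
  · simp [rD, twinVal] at hcost
  · simp [rD, twinVal] at hcost

end Twin

/-! ### The policy `π_*` -/

section PiStar

variable {n i : ℕ}

theorem isBPolicy_piStar (hn : 1 ≤ n) : IsBPolicy n (piStar n) := by
  intro v hv
  cases v with
  | t => exact .inl ⟨1, le_rfl, hn, rfl, rfl⟩
  | s => simp [BEdge, piStar]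
  | d => simp [BEdge, piStar]
  | a i => exact .inr (.inl ⟨i, hv.1, hv.2, rfl, rfl⟩)
  | b i =>
    rcases eq_or_ne i n with rfl | hi
    · exact .inr (.inr (.inr (.inr (.inl ⟨i, hv.1, hv.2, rfl, by simp [piStar, bN]⟩))))
    · exact .inr (.inr (.inr (.inr (.inr (.inl ⟨i, hv.1, hv.2, rfl, by simp [piStar, aN, hi]⟩)))))

theorem NV_piStar {v : BV} (hv : v ≠ BV.s) : NV n (piStar n v) = NV n v + 1 := by
  cases v with
  | s => exact absurd rfl hv
  | b i =>
    rcases eq_or_ne i n with rfl | hi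
    · simp [piStar, NV]
    · simp only [piStar, NV, hi, if_false]
      ring
  | _ => rfl

theorem bWeakUnichain_piStar (hn : 1 ≤ n) : BWeakUnichain n (piStar n) := by
  refine bWeakUnichain_of_rank_lt (isBPolicy_piStar hn) (fun v ↦ NV n BV.s - NV n v)
    fun v hv hvs ↦ ?_
  have hlt : NV n v < NV n BV.s := by
    cases v <;> simp only [IsBVertex, NV, ne_eq, not_true] at * <;> omega
  simp only [NV_piStar hvs]
  omega

theorem BVal_piStar_eq (hn : 1 ≤ n) {v : BV} (hv : IsBVertex n v) (hvs : v ≠ BV.s) :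
    BVal n (piStar n) v = rB n v (piStar n v) + BVal n (piStar n) (piStar n v) :=
  BVal_eq_of_ne_sink (bWeakUnichain_piStar hn v hv) hvs

theorem BVal_piStar_d (hn : 1 ≤ n) : BVal n (piStar n) BV.d = 0 := by
  simp [BVal_piStar_eq hn (v := BV.d) trivial, piStar, rB, BVal_sink]

theorem BVal_piStar_b (hi : 1 ≤ i) (hin : i ≤ n) :
    BVal n (piStar n) (BV.b i) = 2 ^ (n + 1) - 2 ^ (i + 1) + 3 / 4 := by
  have hn := hi.trans hin
  induction hin using Nat.decreasingInduction with
  | self => simp [BVal_piStar_eq hn (v := BV.b n) ⟨hn, le_rfl⟩, piStar, rB, BVal_piStar_d hn]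
  | of_succ i hin ih =>
    have hb : piStar n (BV.b i) = BV.a (i + 1) := by simp [piStar, hin.ne]
    rw [BVal_piStar_eq hn (v := BV.b i) ⟨hi, hin.le⟩ (by simp), hb,
      BVal_piStar_eq hn (v := BV.a (i + 1)) ⟨by omega, hin⟩ (by simp)]
    simp only [piStar, rB, if_true, ih (by omega)]
    ring

theorem BVal_piStar_a (hi : 1 ≤ i) (hin : i ≤ n) :
    BVal n (piStar n) (BV.a i) = 2 ^ (n + 1) - 2 ^ i + 3 / 4 := by
  rw [BVal_piStar_eq (hi.trans hin) (v := BV.a i) ⟨hi, hin⟩ (by simp)]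
  simp only [piStar, rB, if_true, BVal_piStar_b hi hin]
  ring

theorem BVal_piStar_t (hn : 1 ≤ n) : BVal n (piStar n) BV.t = 2 ^ (n + 1) - 2 + 3 / 4 := by
  simp [BVal_piStar_eq hn (v := BV.t) trivial, piStar, rB, BVal_piStar_a le_rfl hn]

theorem BVal_piStar_aN_le (hi : 1 ≤ i) (hin : i ≤ n + 1) :
    BVal n (piStar n) (aN n i) ≤ 2 ^ (n + 1) - 2 ^ i + 3 / 4 := by
  unfold aN
  split_ifs with h
  · norm_num [h, BVal_sink]
  · exact (BVal_piStar_a hi (by omega)).le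

theorem rB_aN (n i : ℕ) (v : BV) : rB n v (aN n i) = 0 := by
  unfold aN
  split_ifs <;> cases v <;> rfl

theorem zB_piStar_stay_nonpos (hi : 1 ≤ i) (hin : i ≤ n) :
    zB n (piStar n) (BV.b i) (bN n (i + 1)) ≤ 0 := by
  have hn := hi.trans hin
  rcases eq_or_ne i n with rfl | hne
  · have hstay : bN i (i + 1) = piStar i (BV.b i) := by simp [bN, piStar]
    have hb : IsBVertex i (BV.b i) := ⟨hi, hin⟩
    rw [hstay, zB_self (isBPolicy_piStar hn) (bWeakUnichain_piStar hn) hb]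
  · have hpow : (1 : ℚ) ≤ 2 ^ (i + 1) := one_le_pow₀ one_le_two
    have hnext := BVal_piStar_b (n := n) (i := i + 1) (by omega) (by omega)
    simp only [bN, zB, rB, add_left_inj, hne, if_false, if_true, BVal_piStar_b hi hin, hnext,
      pow_succ _ (i + 1)]
    linarith

theorem zB_piStar_nonpos {v w : BV} (hn : 1 ≤ n) (h : BEdge n v w) :
    zB n (piStar n) v w ≤ 0 := by
  have zB_active {v : BV} (hv : IsBVertex n v) : zB n (piStar n) v (piStar n v) ≤ 0 :=
    (zB_self (isBPolicy_piStar hn) (bWeakUnichain_piStar hn) hv).le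
  rcases h with ⟨i, hi, hin, rfl, rfl⟩ | ⟨i, hi, hin, rfl, rfl⟩ | ⟨i, hi, hin, rfl, rfl⟩ |
    ⟨i, hi, hin, rfl, rfl⟩ | ⟨i, hi, hin, rfl, rfl⟩ | ⟨i, hi, hin, rfl, rfl⟩ | ⟨rfl, rfl⟩ |
    ⟨rfl, rfl⟩
  · have hpow : (2 : ℚ) ≤ 2 ^ i := le_self_pow₀ one_le_two (by omega)
    simp only [zB, rB, BVal_piStar_t hn, BVal_piStar_a hi hin]
    linarith
  · exact zB_active (v := BV.a i) ⟨hi, hin⟩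
  · have hpow : (2 : ℚ) ^ i ≤ 2 ^ (i + 1) := pow_le_pow_right₀ one_le_two i.le_succ
    have hskip := BVal_piStar_aN_le (n := n) (i := i + 1) (by omega) (by omega)
    simp only [zB, rB_aN, BVal_piStar_a hi hin]
    linarith
  · simp only [zB, rB, BVal_piStar_t hn, BVal_piStar_a hi hin]
    linarith
  · exact zB_piStar_stay_nonpos hi hin
  · have hleave := BVal_piStar_aN_le (n := n) (i := i + 1) (by omega) (by omega)
    simp only [zB, rB_aN, BVal_piStar_b hi hin]
    linarith
  · exact zB_active (v := BV.d) trivial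
  · exact zB_active (v := BV.s) trivial

theorem not_bImproving_piStar (hn : 1 ≤ n) (v w : BV) : ¬ BImproving n (piStar n) v w :=
  fun ⟨h, hcost⟩ ↦ hcost.not_ge (zB_piStar_nonpos hn h)

end PiStar

/-- The twin policy of every weak unichain policy for `𝔅_n` is a weak unichain policy
for `𝔇_n`, and the twin policy of the optimal policy `π_*` is optimal for `𝔇_n`. -/
theorem stmt10 (n : ℕ) (hn : 1 ≤ n) (p : BV → ℚ)
    (hp : ∀ v, IsBVertex n v → v ≠ BV.s → 0 < p v ∧ p v ≤ 1) :
    (∀ π, IsBPolicy n π → BWeakUnichain n π →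
      IsDPolicy n (twin π) ∧ DWeakUnichain n p (twin π)) ∧
    (∀ π', IsDPolicy n π' → DWeakUnichain n p π' →
      ∀ u, IsDVertex n u → DVal n p π' u ≤ DVal n p (twin (piStar n)) u) := by
  have twin_valid (π) (hπ : IsBPolicy n π) (hu : BWeakUnichain n π) :
      IsDPolicy n (twin π) ∧ DWeakUnichain n p (twin π) :=
    ⟨isDPolicy_twin hπ, dWeakUnichain_twin (fun v hv hvs ↦ (hp v hv hvs).1) hπ hu⟩
  have hstar := isBPolicy_piStar hn
  have hstaru := bWeakUnichain_piStar hn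
  obtain ⟨hD, hDu⟩ := twin_valid (piStar n) hstar hstaru
  have hopt := not_dImproving_twin hp hstar hstaru (not_bImproving_piStar hn)
  exact ⟨twin_valid, fun π' hπ' hu' u hu ↦
    DVal_le_DVal_of_not_dImproving hp hD hDu hopt hπ' hu' hu⟩
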